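/- For every γ < 1 − d/4 there exists a constant C > 0 such that for all 0 ≤ t_0 < t ≤ T and all x ∈ D, ∫_{t_0}^t ∫_D G_{t−s}(x,y)² dy ds ≤ C (t − t_0)^γ. -/

import Mathlib

open MeasureTheory Real Filter

noncomputable section

/-- The spatial domain `[0, π]^d`. -/
def Dom (d : ℕ) : Set (Fin d → ℝ) := Set.Icc 0 (fun _ => Real.pi)

/-- Normalizing constants of the Neumann cosine basis. -/
def eps0 (j : ℕ) : ℝ := if j = 0 then Real.sqrt (1 / Real.pi) else Real.sqrt (2 / Real.pi)

/-- Neumann eigenfunctions of `-Δ` on `[0, π]^d`. -/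
def phi {d : ℕ} (k : Fin d → ℕ) (x : Fin d → ℝ) : ℝ :=
  ∏ i, eps0 (k i) * Real.cos ((k i : ℝ) * x i)

/-- `|k|² = Σ kᵢ²`. -/
def ksq {d : ℕ} (k : Fin d → ℕ) : ℝ := ∑ i, (k i : ℝ) ^ 2

/-- Green function of `∂ₜ + Δ²` with Neumann boundary conditions on `[0, π]^d`. -/
def green {d : ℕ} (t : ℝ) (x y : Fin d → ℝ) : ℝ :=
  ∑' k : Fin d → ℕ, Real.exp (-(ksq k ^ 2) * t) * phi k x * phi k y

/-- Laplacian in the `x`-variable of the Green function. -/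
def greenLap {d : ℕ} (t : ℝ) (x y : Fin d → ℝ) : ℝ :=
  -∑' k : Fin d → ℕ, ksq k * Real.exp (-(ksq k ^ 2) * t) * phi k x * phi k y

/-- The `L^p([0,π]^d)`-norm (real exponent `p`). -/
def LpNorm {d : ℕ} (p : ℝ) (u : (Fin d → ℝ) → ℝ) : ℝ :=
  (∫ x in Dom d, |u x| ^ p) ^ (1 / p)

/-- Integration of a uniformly absolutely convergent series against a bounded continuous weight. -/
lemma integral_tsum_mul_of_continuous_of_abs_le {α ι : Type*} [TopologicalSpace α]
    [MeasurableSpace α] [BorelSpace α] [Countable ι] {μ : Measure α} [IsFiniteMeasure μ]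
    {F : ι → α → ℝ} {a : ι → ℝ} (hF : ∀ i, Continuous (F i)) (hFa : ∀ i y, |F i y| ≤ a i)
    (ha : Summable a) {H : α → ℝ} (hH : Continuous H) {M : ℝ} (hM : ∀ y, |H y| ≤ M) :
    ∫ y, (∑' i, F i y) * H y ∂μ = ∑' i, ∫ y, F i y * H y ∂μ := by
  have hbound : ∀ i y, ‖F i y * H y‖ ≤ a i * M := fun i y => by
    rw [Real.norm_eq_abs, abs_mul]
    exact mul_le_mul (hFa i y) (hM y) (abs_nonneg _) ((abs_nonneg _).trans (hFa i y))
  have hint : ∀ i, Integrable (fun y => F i y * H y) μ := fun i =>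
    Integrable.of_bound ((hF i).mul hH).measurable.aestronglyMeasurable (a i * M)
      (Eventually.of_forall (hbound i))
  have hsum : Summable fun i => ∫ y, ‖F i y * H y‖ ∂μ := by
    refine Summable.of_nonneg_of_le (fun i => integral_nonneg fun y => norm_nonneg _)
      (fun i => ?_) ((ha.mul_right M).mul_right (μ.real Set.univ))
    calc ∫ y, ‖F i y * H y‖ ∂μ ≤ ∫ _, a i * M ∂μ :=
          integral_mono (hint i).norm (integrable_const _) (hbound i)
      _ = a i * M * μ.real Set.univ := by simp [mul_comm]
  rw [(hasSum_integral_of_summable_integral_norm hint hsum).tsum_eq]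
  exact integral_congr_ae (Eventually.of_forall fun y => tsum_mul_right.symm)

/-- Parseval's identity for a uniformly absolutely convergent orthogonal series. -/
lemma integral_tsum_sq_of_orthogonal {α ι : Type*} [TopologicalSpace α]
    [MeasurableSpace α] [BorelSpace α] [Countable ι] {μ : Measure α} [IsFiniteMeasure μ]
    {F : ι → α → ℝ} {a : ι → ℝ} (hF : ∀ i, Continuous (F i)) (hFa : ∀ i y, |F i y| ≤ a i)
    (ha : Summable a) (horth : ∀ i j, i ≠ j → ∫ y, F i y * F j y ∂μ = 0) :
    ∫ y, (∑' i, F i y) ^ 2 ∂μ = ∑' i, ∫ y, F i y ^ 2 ∂μ := by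
  have hcont : Continuous fun y => ∑' i, F i y := continuous_tsum hF ha hFa
  have hbound : ∀ y, |∑' i, F i y| ≤ ∑' i, a i := fun y =>
    tsum_of_norm_bounded (f := fun i => F i y) ha.hasSum (fun i => hFa i y)
  simp_rw [sq]
  rw [integral_tsum_mul_of_continuous_of_abs_le hF hFa ha hcont hbound]
  refine tsum_congr fun i => ?_
  simp_rw [mul_comm (F i _) (∑' j, F j _)]
  rw [integral_tsum_mul_of_continuous_of_abs_le hF hFa ha (hF i) (hFa i)]
  exact tsum_eq_single i fun j hj => horth j i hj

/-- Sums of tensor powers of a nonnegative summable sequence. -/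
lemma sum_prod_le_tsum_pow {d : ℕ} {g : ℕ → ℝ} (hg : ∀ j, 0 ≤ g j) (hs : Summable g)
    (u : Finset (Fin d → ℕ)) : ∑ k ∈ u, ∏ i, g (k i) ≤ (∑' j, g j) ^ d := by
  classical
  set s : Finset ℕ := u.biUnion fun k => Finset.univ.image k
  have hu : u ⊆ Fintype.piFinset fun _ : Fin d => s := fun k hk => by
    rw [Fintype.mem_piFinset]
    exact fun i => Finset.mem_biUnion.2 ⟨k, hk, Finset.mem_image_of_mem k (Finset.mem_univ i)⟩
  calc ∑ k ∈ u, ∏ i, g (k i) ≤ ∑ k ∈ Fintype.piFinset fun _ : Fin d => s, ∏ i, g (k i) :=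
        Finset.sum_le_sum_of_subset_of_nonneg hu fun k _ _ =>
          Finset.prod_nonneg fun i _ => hg _
    _ = (∑ j ∈ s, g j) ^ d := (Finset.sum_pow' s g d).symm
    _ ≤ (∑' j, g j) ^ d :=
        pow_le_pow_left₀ (Finset.sum_nonneg fun j _ => hg j) (hs.sum_le_tsum s fun j _ => hg j) d

lemma sum_pow_four_le_ksq_sq {d : ℕ} (k : Fin d → ℕ) : ∑ i, (k i : ℝ) ^ 4 ≤ ksq k ^ 2 := by
  have h := Finset.sum_sq_le_sq_sum_of_nonneg (s := Finset.univ)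
    (f := fun i => (k i : ℝ) ^ 2) fun i _ => by positivity
  simpa [ksq, ← pow_mul] using h

lemma exp_neg_ksq_sq_le_prod {d : ℕ} {τ : ℝ} (hτ : 0 < τ) (k : Fin d → ℕ) :
    exp (-(ksq k ^ 2) * τ) ≤ ∏ i, exp 1 * exp (-τ ^ (1 / 4 : ℝ)) ^ k i := by
  set r : ℝ := τ ^ (1 / 4 : ℝ)
  have hr : 0 < r := rpow_pos_of_pos hτ _
  have hr4 : r ^ 4 = τ := by
    rw [← rpow_natCast, ← rpow_mul hτ.le]; norm_num
  have hu : ∀ u : ℝ, 0 ≤ u → u ≤ 1 + u ^ 4 := fun u _ => by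
    nlinarith [sq_nonneg (u ^ 2 - 1 / 2), sq_nonneg (u - 1 / 2)]
  simp_rw [← exp_nat_mul, ← exp_add, ← exp_sum]
  rw [exp_le_exp]
  calc -(ksq k ^ 2) * τ ≤ -(∑ i, (k i : ℝ) ^ 4) * τ := by
        have := sum_pow_four_le_ksq_sq k
        gcongr
    _ = ∑ i, -((k i : ℝ) * r) ^ 4 := by
        rw [← hr4, neg_mul, Finset.sum_mul, ← Finset.sum_neg_distrib]
        exact Finset.sum_congr rfl fun i _ => by ring
    _ ≤ ∑ i, (1 + (k i : ℝ) * -r) := Finset.sum_le_sum fun i _ => by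
        have := hu ((k i : ℝ) * r) (by positivity)
        linarith

lemma tsum_exp_neg_pow_le {r : ℝ} (hr : 0 < r) :
    ∑' j : ℕ, exp 1 * exp (-r) ^ j ≤ exp 1 * (1 + r) / r := by
  have h1 : exp (-r) < 1 := by simpa using hr
  rw [tsum_mul_left, tsum_geometric_of_lt_one (exp_pos _).le h1, mul_div_assoc]
  gcongr
  rw [inv_le_comm₀ (by linarith) (by positivity), inv_div, exp_neg]
  have h2 : (exp r)⁻¹ ≤ (1 + r)⁻¹ :=
    inv_anti₀ (by positivity) (by linarith [add_one_le_exp r])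
  have h3 : r / (1 + r) = 1 - (1 + r)⁻¹ := by field_simp; ring
  linarith

lemma sum_exp_neg_ksq_sq_le {d : ℕ} {τ : ℝ} (hτ : 0 < τ) (u : Finset (Fin d → ℕ)) :
    ∑ k ∈ u, exp (-(ksq k ^ 2) * τ) ≤
      (exp 1 * (1 + τ ^ (1 / 4 : ℝ)) / τ ^ (1 / 4 : ℝ)) ^ d := by
  have hr : 0 < τ ^ (1 / 4 : ℝ) := rpow_pos_of_pos hτ _
  have h1 : exp (-τ ^ (1 / 4 : ℝ)) < 1 := by simpa using hr
  calc ∑ k ∈ u, exp (-(ksq k ^ 2) * τ)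
      ≤ ∑ k ∈ u, ∏ i, exp 1 * exp (-τ ^ (1 / 4 : ℝ)) ^ k i :=
        Finset.sum_le_sum fun k _ => exp_neg_ksq_sq_le_prod hτ k
    _ ≤ (∑' j : ℕ, exp 1 * exp (-τ ^ (1 / 4 : ℝ)) ^ j) ^ d :=
        sum_prod_le_tsum_pow (fun j => by positivity)
          ((summable_geometric_of_lt_one (exp_pos _).le h1).mul_left _) u
    _ ≤ _ := pow_le_pow_left₀ (tsum_nonneg fun j => by positivity) (tsum_exp_neg_pow_le hr) d

lemma summable_exp_neg_ksq_sq {d : ℕ} {τ : ℝ} (hτ : 0 < τ) :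
    Summable fun k : Fin d → ℕ => exp (-(ksq k ^ 2) * τ) :=
  summable_of_sum_le (fun _ => (exp_pos _).le) (sum_exp_neg_ksq_sq_le hτ)

lemma abs_eps0_le_one (j : ℕ) : |eps0 j| ≤ 1 := by
  have h2 := two_le_pi
  unfold eps0
  split_ifs <;> rw [abs_of_nonneg (sqrt_nonneg _), sqrt_le_one, div_le_one pi_pos] <;> linarith

lemma abs_phi_le_one {d : ℕ} (k : Fin d → ℕ) (x : Fin d → ℝ) : |phi k x| ≤ 1 := by
  rw [phi, Finset.abs_prod]
  refine Finset.prod_le_one (fun i _ => abs_nonneg _) fun i _ => ?_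
  rw [abs_mul]
  exact mul_le_one₀ (abs_eps0_le_one _) (abs_nonneg _) (abs_cos_le_one _)

lemma continuous_phi {d : ℕ} (k : Fin d → ℕ) : Continuous (phi k) := by
  unfold phi
  fun_prop

lemma integral_cos_int_mul_eq_zero {n : ℤ} (hn : n ≠ 0) :
    ∫ x in (0 : ℝ)..π, cos ((n : ℝ) * x) = 0 := by
  have hn' : (n : ℝ) ≠ 0 := by exact_mod_cast hn
  rw [intervalIntegral.integral_comp_mul_left _ hn', integral_cos]
  simp [sin_int_mul_pi]

lemma integral_cos_mul_cos_eq_zero {m n : ℕ} (h : m ≠ n) :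
    ∫ x in Set.Icc (0 : ℝ) π, cos ((m : ℝ) * x) * cos ((n : ℝ) * x) = 0 := by
  have h1 : ((m : ℤ) - n) ≠ 0 := by omega
  have h2 : ((m : ℤ) + n) ≠ 0 := by omega
  have hcos : ∀ x : ℝ, cos ((m : ℝ) * x) * cos ((n : ℝ) * x) =
      (cos ((((m : ℤ) - n : ℤ) : ℝ) * x) + cos ((((m : ℤ) + n : ℤ) : ℝ) * x)) / 2 := fun x => by
    push_cast
    rw [sub_mul, add_mul, cos_sub, cos_add]
    ring
  rw [integral_Icc_eq_integral_Ioc, ← intervalIntegral.integral_of_le pi_pos.le]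
  simp_rw [hcos]
  rw [intervalIntegral.integral_div, intervalIntegral.integral_add
    (Continuous.intervalIntegrable (by fun_prop) _ _)
    (Continuous.intervalIntegrable (by fun_prop) _ _),
    integral_cos_int_mul_eq_zero h1, integral_cos_int_mul_eq_zero h2]
  simp

lemma restrict_Dom (d : ℕ) : (volume : Measure (Fin d → ℝ)).restrict (Dom d) =
    Measure.pi fun _ => (volume : Measure ℝ).restrict (Set.Icc 0 π) := by
  rw [← Measure.restrict_pi_pi, ← volume_pi, Dom, ← Set.pi_univ_Icc]
  rfl

instance isFiniteMeasure_restrict_Dom (d : ℕ) :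
    IsFiniteMeasure ((volume : Measure (Fin d → ℝ)).restrict (Dom d)) := by
  rw [restrict_Dom]
  infer_instance

lemma integral_phi_mul_phi_eq_zero {d : ℕ} {k l : Fin d → ℕ} (h : k ≠ l) :
    ∫ y in Dom d, phi k y * phi l y = 0 := by
  obtain ⟨i, hi⟩ := Function.ne_iff.1 h
  have hprod : ∀ y, phi k y * phi l y = ∏ i, eps0 (k i) * eps0 (l i) *
      (cos ((k i : ℝ) * y i) * cos ((l i : ℝ) * y i)) := fun y => by
    rw [phi, phi, ← Finset.prod_mul_distrib]
    exact Finset.prod_congr rfl fun i _ => by ring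
  simp_rw [hprod, restrict_Dom]
  rw [integral_fintype_prod_eq_prod (fun i (z : ℝ) => eps0 (k i) * eps0 (l i) *
    (cos ((k i : ℝ) * z) * cos ((l i : ℝ) * z)))]
  refine Finset.prod_eq_zero (Finset.mem_univ i) ?_
  rw [integral_const_mul, integral_cos_mul_cos_eq_zero hi, mul_zero]

/-- The spatial `L²`-bound for the Green function at a fixed positive time. -/
lemma integral_green_sq_le {d : ℕ} {τ : ℝ} (hτ : 0 < τ) (x : Fin d → ℝ) :
    ∫ y in Dom d, green τ x y ^ 2 ≤
      volume.real (Dom d) * (exp 1 * (1 + τ ^ (1 / 4 : ℝ)) / τ ^ (1 / 4 : ℝ)) ^ d := by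
  set e : (Fin d → ℕ) → ℝ := fun k => exp (-(ksq k ^ 2) * τ)
  have he0 : ∀ k, 0 ≤ e k := fun k => (exp_pos _).le
  have he1 : ∀ k, e k ≤ 1 := fun k => exp_le_one_iff.2 (by nlinarith [sq_nonneg (ksq k)])
  have hes : Summable e := summable_exp_neg_ksq_sq hτ
  have hbound : ∀ k y, |e k * phi k x * phi k y| ≤ e k := fun k y => by
    rw [abs_mul, abs_mul, abs_of_nonneg (he0 k), mul_assoc]
    exact mul_le_of_le_one_right (he0 k)
      (mul_le_one₀ (abs_phi_le_one k x) (abs_nonneg _) (abs_phi_le_one k y))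
  have hcont : ∀ k, Continuous fun y => e k * phi k x * phi k y := fun k =>
    continuous_const.mul (continuous_phi k)
  have horth : ∀ k l, k ≠ l →
      ∫ y in Dom d, (e k * phi k x * phi k y) * (e l * phi l x * phi l y) = 0 := fun k l hkl => by
    simp_rw [mul_mul_mul_comm (e k * phi k x) (phi k _) (e l * phi l x) (phi l _)]
    rw [integral_const_mul, integral_phi_mul_phi_eq_zero hkl, mul_zero]
  have hterm : ∀ k, ∫ y in Dom d, (e k * phi k x * phi k y) ^ 2 ≤ volume.real (Dom d) * e k := by
    intro k
    have hle : ∀ y, (e k * phi k x * phi k y) ^ 2 ≤ e k := fun y => by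
      have h1 := hbound k y
      rw [← sq_abs]
      nlinarith [abs_nonneg (e k * phi k x * phi k y), he0 k, he1 k]
    calc ∫ y in Dom d, (e k * phi k x * phi k y) ^ 2 ≤ ∫ _ in Dom d, e k :=
          integral_mono_of_nonneg (Eventually.of_forall fun y => sq_nonneg _)
            (integrable_const _) (Eventually.of_forall hle)
      _ = volume.real (Dom d) * e k := by simp
  unfold green
  rw [integral_tsum_sq_of_orthogonal hcont hbound hes horth]
  refine Real.tsum_le_of_sum_le (fun k => integral_nonneg fun y => sq_nonneg _) fun u => ?_
  calc ∑ k ∈ u, ∫ y in Dom d, (e k * phi k x * phi k y) ^ 2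
      ≤ ∑ k ∈ u, volume.real (Dom d) * e k := Finset.sum_le_sum fun k _ => hterm k
    _ = volume.real (Dom d) * ∑ k ∈ u, e k := by rw [Finset.mul_sum]
    _ ≤ _ := by gcongr; exact sum_exp_neg_ksq_sq_le hτ u

lemma integral_green_sq_le_rpow {d : ℕ} {T τ : ℝ} (hτ : 0 < τ) (hτT : τ ≤ T) (x : Fin d → ℝ) :
    ∫ y in Dom d, green τ x y ^ 2 ≤
      volume.real (Dom d) * (exp 1 * (1 + T ^ (1 / 4 : ℝ))) ^ d * τ ^ (-((d : ℝ) / 4)) := by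
  have hpow : (τ ^ (1 / 4 : ℝ)) ^ d = τ ^ ((d : ℝ) / 4) := by
    rw [← rpow_natCast, ← rpow_mul hτ.le]
    congr 1
    ring
  refine (integral_green_sq_le hτ x).trans ?_
  rw [div_pow, hpow, rpow_neg hτ.le, mul_assoc, ← div_eq_mul_inv]
  gcongr

/-- Lemma 3.1(2): for `γ < 1 - d/4` there is `C > 0` with
`∫_{t₀}^t ∫_D G_{t-s}(x,y)² dy ds ≤ C (t - t₀)^γ`. -/
theorem green_sq_time_integral_bound (d : ℕ) (hd : d ∈ ({1, 2, 3} : Set ℕ)) (T : ℝ)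
    (hT : 0 < T) (γ : ℝ) (hγ : γ < 1 - (d : ℝ) / 4) :
    ∃ C > 0, ∀ t₀ t : ℝ, 0 ≤ t₀ → t₀ < t → t ≤ T → ∀ x ∈ Dom d,
      (∫ s in t₀..t, ∫ y in Dom d, (green (t - s) x y) ^ 2) ≤ C * (t - t₀) ^ γ := by
  have hd4 : (d : ℝ) < 4 := by
    rcases hd with rfl | rfl | rfl <;> norm_num
  have hα : 0 < 1 - (d : ℝ) / 4 := by linarith
  set K : ℝ := volume.real (Dom d) * (exp 1 * (1 + T ^ (1 / 4 : ℝ))) ^ d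
  have hK : 0 ≤ K := by positivity
  refine ⟨K / (1 - (d : ℝ) / 4) * T ^ (1 - (d : ℝ) / 4 - γ) + 1, by positivity, ?_⟩
  intro t₀ t ht₀ ht htT x _
  have hpos : 0 < t - t₀ := sub_pos.2 ht
  have hexp : -1 < -((d : ℝ) / 4) := by linarith
  have hint : IntervalIntegrable (fun s => K * (t - s) ^ (-((d : ℝ) / 4))) volume t₀ t := by
    have h := (intervalIntegral.intervalIntegrable_rpow' (a := t - t₀) (b := t - t)
      hexp).comp_sub_left t
    simp only [sub_sub_cancel] at h
    exact h.const_mul K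
  have hval : ∫ s in t₀..t, K * (t - s) ^ (-((d : ℝ) / 4)) =
      K / (1 - (d : ℝ) / 4) * (t - t₀) ^ (1 - (d : ℝ) / 4) := by
    rw [intervalIntegral.integral_const_mul,
      intervalIntegral.integral_comp_sub_left (fun s => s ^ (-((d : ℝ) / 4))) t,
      integral_rpow (Or.inl hexp), sub_self, neg_add_eq_sub, zero_rpow hα.ne']
    ring
  calc ∫ s in t₀..t, ∫ y in Dom d, green (t - s) x y ^ 2
      ≤ ∫ s in t₀..t, K * (t - s) ^ (-((d : ℝ) / 4)) := by
        have hint' := (intervalIntegrable_iff_integrableOn_Ioo_of_le ht.le).1 hint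
        rw [intervalIntegral.integral_of_le ht.le, intervalIntegral.integral_of_le ht.le,
          integral_Ioc_eq_integral_Ioo, integral_Ioc_eq_integral_Ioo]
        refine integral_mono_of_nonneg
          (Eventually.of_forall fun s => integral_nonneg fun y => sq_nonneg _) hint' ?_
        filter_upwards [ae_restrict_mem measurableSet_Ioo] with s hs
        exact integral_green_sq_le_rpow (sub_pos.2 hs.2) (by linarith [hs.1]) x
    _ = K / (1 - (d : ℝ) / 4) * ((t - t₀) ^ (1 - (d : ℝ) / 4 - γ) * (t - t₀) ^ γ) := by
        rw [hval, ← rpow_add hpos, sub_add_cancel]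
    _ ≤ K / (1 - (d : ℝ) / 4) * (T ^ (1 - (d : ℝ) / 4 - γ) * (t - t₀) ^ γ) := by
        gcongr
        linarith
    _ ≤ (K / (1 - (d : ℝ) / 4) * T ^ (1 - (d : ℝ) / 4 - γ) + 1) * (t - t₀) ^ γ := by
        have := rpow_pos_of_pos hpos γ
        linarith
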